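/- arXiv:1107.1016 — 6 statements merged into one kernel-verified Lean document; each statement's English description precedes it below -/
import Mathlib

section
/- Let n ≥ 1, let S ⊂ ℝⁿ be a well-centered convex body, and fix 0 ≤ s ≤ s₀ < 1. For each y ∈ (1−s)∂S (i.e. y = (1−s)p for some boundary point p of S) there exists a hyperplane P supporting S such that dist(y, P) ≤ c(n,s₀) · s^(1/2^(n−1)) · diam(P^⊥ ∩ S), where c(n,s₀) = n^(3/2) (n − 1/2) ((1 + s₀^(1/2^n))/(1 − s₀^(1/2^n)))^(n−1). -/
/-!
The case `s = 0` is settled by any hyperplane supporting `S` at `p`. Let `0 < s < 1`.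

Put `g = f⁻¹` and work in the coordinates `g x`, in which `B ⊆ g S ⊆ n B` for the unit ball `B`.
A functional `⟪g ·, w⟫` has Euclidean normal `v = g† w`, and since `± v / ‖g v‖ ∈ S`, the line
spanned by `v` meets `S` in a set of diameter at least `2 ‖v‖ / ‖g v‖`. As the distance from `y` to
the supporting hyperplane with normal `v` is `(max_S ⟪·, v⟫ - ⟪y, v⟫) / ‖v‖`, it suffices to find
`w'` with `v = g† w'` for which `max_S ⟪·, v⟫ - ⟪y, v⟫` is small compared with `‖v‖² / ‖g v‖`.

Let `w` be the unit vector of a functional supporting `S` at `p`, and let `w_i` be its coordinates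
in an eigenbasis of `g g†` with eigenvalues `b_0 ≥ b_1 ≥ …`. Truncate: `w'` keeps the coordinates
with `i ≥ k` and sets the others to zero.

* `abs_mul_sqrt_le` gives `‖v‖² / ‖g v‖ ≥ |w_k|`, because
  `‖v‖² = ∑ b_i w'_i²`, `‖g v‖² = ∑ b_i² w'_i²`, and `b_k` is the largest eigenvalue left.
* Truncation costs at most `2 n ‖w - w'‖`, so the numerator is at most `n s + 2 n ‖w - w'‖`.
* `exists_cutoff` compares `|w_k|` with the geometric thresholds `σ ^ (n - 1 - k) / √n`, where
  `σ = s ^ (1/n)`. Not all coordinates of a unit vector lie below them, and the first `k` that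
  reaches its threshold makes the numerator at most `n^(3/2) (2 n - 1) σ |w_k|`.

This yields the estimate with `σ = s ^ (1/n)` and constant `n^(3/2) (n - 1/2)`, which is stronger
than required since `n ≤ 2^(n-1)` and `(1 + t) / (1 - t) ≥ 1` for `0 ≤ t < 1`.
-/

open Metric Set
open scoped RealInnerProductSpace Pointwise

/-- A unit vector has a coordinate that dominates all earlier ones by a factor of order `σ⁻¹`
(and is itself at least of order `σ ^ (n - 1)`): the first one to reach the threshold
`σ ^ (n - 1 - k) / √n`. -/
lemma exists_cutoff {n : ℕ} (w : Fin n → ℝ) (hw : ∑ i, w i ^ 2 = 1)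
    {σ : ℝ} (hσ : 0 < σ) (hσ1 : σ < 1) :
    ∃ k : Fin n, 0 < |w k| ∧ σ ^ n * n + 2 * n * √(∑ i, if i < k then w i ^ 2 else 0) ≤
      (n : ℝ) * √n * (2 * n - 1) * σ * |w k| := by
  have hn : 0 < n := by
    rcases Nat.eq_zero_or_pos n with rfl | h
    · simp at hw
    · exact h
  have hn1 : (1 : ℝ) ≤ n := by exact_mod_cast hn
  have hsn : 0 < √(n : ℝ) := Real.sqrt_pos.2 (by linarith)
  have hsq : √(n : ℝ) ^ 2 = n := Real.sq_sqrt (by linarith)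
  -- the squares of the thresholds add up to at most one
  have hex : ∃ k : Fin n, σ ^ (n - 1 - (k : ℕ)) / √n ≤ |w k| := by
    by_contra! h
    have hlt : ∑ i, w i ^ 2 < ∑ _i : Fin n, (1 : ℝ) / n := by
      refine Finset.sum_lt_sum_of_nonempty ⟨⟨0, hn⟩, Finset.mem_univ _⟩ fun i _ => ?_
      have h1 : |w i| < 1 / √n :=
        (h i).trans_le (by gcongr; exact pow_le_one₀ hσ.le hσ1.le)
      have h2 : |w i| ^ 2 < (1 / √n) ^ 2 := by gcongr
      rwa [sq_abs, div_pow, hsq, one_pow] at h2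
    rw [hw] at hlt
    simp at hlt
    rw [mul_inv_cancel₀ (by positivity)] at hlt
    exact lt_irrefl _ hlt
  obtain ⟨k, hk, hmin⟩ := wellFounded_lt.has_min
    {k : Fin n | σ ^ (n - 1 - (k : ℕ)) / √n ≤ |w k|} hex
  have hk : σ ^ (n - 1 - (k : ℕ)) / √n ≤ |w k| := hk
  refine ⟨k, lt_of_lt_of_le (by positivity) hk, ?_⟩
  have hkn := k.2
  have hpow : σ ^ (n - 1 - (k : ℕ)) * σ = σ ^ (n - (k : ℕ)) := by
    rw [← pow_succ]; congr 1; omega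
  have hR : (n : ℝ) * (2 * n - 1) * σ ^ (n - (k : ℕ)) ≤ n * √n * (2 * n - 1) * σ * |w k| := by
    have h1 : σ ^ (n - 1 - (k : ℕ)) ≤ √n * |w k| := by
      rw [div_le_iff₀ hsn] at hk; linarith
    have h2 : 0 ≤ (n : ℝ) * (2 * n - 1) * σ :=
      mul_nonneg (mul_nonneg (by linarith) (by linarith)) hσ.le
    have h3 := mul_le_mul_of_nonneg_left h1 h2
    rw [← hpow]
    linarith
  refine le_trans ?_ hR
  rcases Nat.eq_zero_or_pos (k : ℕ) with h0 | hpos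
  · have : ∀ i : Fin n, ¬ i < k := fun i hi => by
      have : (i : ℕ) < k := hi
      omega
    simp only [this, if_false, Finset.sum_const_zero, Real.sqrt_zero, mul_zero, add_zero, h0,
      Nat.sub_zero]
    have : 0 ≤ σ ^ n * n * (2 * n - 2) :=
      mul_nonneg (by positivity) (by linarith)
    linarith
  · have hn2 : (2 : ℝ) ≤ n := by exact_mod_cast (by omega : 2 ≤ n)
    have hd : √(∑ i, if i < k then w i ^ 2 else 0) ≤ σ ^ (n - (k : ℕ)) := by
      refine Real.sqrt_le_iff.2 ⟨by positivity, ?_⟩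
      have hle : ∀ i ∈ Finset.univ, (if i < k then w i ^ 2 else 0) ≤
          (σ ^ (n - (k : ℕ))) ^ 2 / n := by
        intro i _
        split_ifs with hi
        · have h1 : |w i| < σ ^ (n - 1 - (i : ℕ)) / √n :=
            not_le.1 fun h => hmin i h hi
          have h2 : |w i| ≤ σ ^ (n - (k : ℕ)) / √n := by
            refine h1.le.trans ?_
            gcongr ?_ / _
            have : (i : ℕ) < k := hi
            exact pow_le_pow_of_le_one hσ.le hσ1.le (by omega)
          have h3 : |w i| ^ 2 ≤ (σ ^ (n - (k : ℕ)) / √n) ^ 2 := by gcongr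
          rwa [sq_abs, div_pow, hsq] at h3
        · positivity
      refine (Finset.sum_le_sum hle).trans (le_of_eq ?_)
      simp
      field_simp
    have hσn : σ ^ n ≤ σ ^ (n - (k : ℕ)) := pow_le_pow_of_le_one hσ.le hσ1.le (by omega)
    have hp : 0 < σ ^ (n - (k : ℕ)) := by positivity
    have e1 : σ ^ n * n ≤ σ ^ (n - (k : ℕ)) * n := by gcongr
    have e2 := mul_le_mul_of_nonneg_left hd (by positivity : (0 : ℝ) ≤ 2 * n)
    have e3 : 0 ≤ n * σ ^ (n - (k : ℕ)) * (2 * n - 4) :=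
      mul_nonneg (by positivity) (by linarith)
    linarith

/-- Lower bound for `‖v‖² / ‖g v‖` written in an eigenbasis: `b` lists the eigenvalues in decreasing
order, and `x` the coordinates of a vector whose components before `k` vanish. -/
lemma abs_mul_sqrt_le {n : ℕ} {b x : Fin n → ℝ} (hb : ∀ i, 0 ≤ b i) (hanti : Antitone b)
    (k : Fin n) (hx : ∀ i < k, x i = 0) :
    |x k| * √(∑ i, (b i * x i) ^ 2) ≤ ∑ i, b i * x i ^ 2 := by
  have hnn : ∀ i ∈ Finset.univ, 0 ≤ b i * x i ^ 2 := fun i _ => mul_nonneg (hb i) (sq_nonneg _)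
  have h0 : 0 ≤ ∑ i, b i * x i ^ 2 := Finset.sum_nonneg hnn
  have h1 : ∑ i, (b i * x i) ^ 2 ≤ b k * ∑ i, b i * x i ^ 2 := by
    rw [Finset.mul_sum]
    refine Finset.sum_le_sum fun i hi => ?_
    rcases lt_or_ge i k with h | h
    · simp [hx i h]
    · have := mul_le_mul_of_nonneg_right (hanti h) (hnn i hi)
      linarith
  have h2 : b k * x k ^ 2 ≤ ∑ i, b i * x i ^ 2 := Finset.single_le_sum hnn (Finset.mem_univ k)
  refine le_of_sq_le_sq ?_ h0
  rw [mul_pow, sq_abs, Real.sq_sqrt (Finset.sum_nonneg fun i _ => sq_nonneg _)]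
  calc x k ^ 2 * ∑ i, (b i * x i) ^ 2 ≤ x k ^ 2 * (b k * ∑ i, b i * x i ^ 2) := by gcongr
    _ = (b k * x k ^ 2) * ∑ i, b i * x i ^ 2 := by ring
    _ ≤ (∑ i, b i * x i ^ 2) ^ 2 := by
      rw [pow_two (∑ i, b i * x i ^ 2)]
      exact mul_le_mul_of_nonneg_right h2 h0

lemma exists_support {E : Type*} [NormedAddCommGroup E] [InnerProductSpace ℝ E] [CompleteSpace E]
    {S : Set E} (hconv : Convex ℝ S) (hint : (interior S).Nonempty) {p : E}
    (hp : p ∈ frontier S) : ∃ v : E, v ≠ 0 ∧ ∀ x ∈ S, ⟪x, v⟫ ≤ ⟪p, v⟫ := by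
  obtain ⟨l, hl⟩ := geometric_hahn_banach_open_point hconv.interior isOpen_interior hp.2
  have key : ∀ x, ⟪x, (InnerProductSpace.toDual ℝ E).symm l⟫ = l x := fun x => by
    rw [real_inner_comm, InnerProductSpace.toDual_symm_apply]
  refine ⟨(InnerProductSpace.toDual ℝ E).symm l, ?_, fun x hx => ?_⟩
  · intro h
    obtain ⟨a, ha⟩ := hint
    have := hl a ha
    rw [← key, ← key, h] at this
    simp at this
  · rw [key, key]
    have hx' : x ∈ closure (interior S) := by
      rw [hconv.closure_interior_eq_closure_of_nonempty_interior hint]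
      exact subset_closure hx
    exact closure_minimal (fun a ha => (hl a ha).le)
      (isClosed_le l.continuous continuous_const) hx'

/-- Truncating a unit vector `w` in an eigenbasis of `g g†` gives a `w'` close to `w`, where
`g† w'` is a normal direction with controlled ratio `‖g† w'‖² / ‖g (g† w')‖`. The witness `m` is the
modulus of the coordinate at the cutoff. -/
lemma exists_truncation {n : ℕ}
    (g : EuclideanSpace ℝ (Fin n) →ₗ[ℝ] EuclideanSpace ℝ (Fin n))
    (w : EuclideanSpace ℝ (Fin n)) (hw : ‖w‖ = 1) {σ : ℝ} (hσ : 0 < σ) (hσ1 : σ < 1) :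
    ∃ (w' : EuclideanSpace ℝ (Fin n)) (m : ℝ), w' ≠ 0 ∧
      σ ^ n * n + 2 * n * ‖w - w'‖ ≤ (n : ℝ) * √n * (2 * n - 1) * σ * m ∧
      m * ‖g (g.adjoint w')‖ ≤ ‖g.adjoint w'‖ ^ 2 := by
  have hpos := g.isPositive_self_comp_adjoint
  have hfin : Module.finrank ℝ (EuclideanSpace ℝ (Fin n)) = n := by simp
  set u := hpos.isSymmetric.eigenvectorBasis hfin with hu
  set b := hpos.isSymmetric.eigenvalues hfin with hb
  have hnorm : ∀ z : EuclideanSpace ℝ (Fin n), ‖z‖ ^ 2 = ∑ i, u.repr z i ^ 2 := fun z => by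
    rw [← u.repr.norm_map, EuclideanSpace.real_norm_sq_eq]
  obtain ⟨k, hk0, hk⟩ := exists_cutoff (fun i => u.repr w i) (by rw [← hnorm, hw, one_pow]) hσ hσ1
  set w' := u.repr.symm (WithLp.toLp 2 fun i => if i < k then 0 else u.repr w i) with hw'
  have hrep : ∀ i, u.repr w' i = if i < k then 0 else u.repr w i := fun i => by
    simp [hw']
  have hrepk : u.repr w' k = u.repr w k := by simp [hrep]
  have hdiff : ‖w - w'‖ = √(∑ i, if i < k then u.repr w i ^ 2 else 0) := by
    rw [← Real.sqrt_sq (norm_nonneg (w - w')), hnorm]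
    congr 1
    refine Finset.sum_congr rfl fun i _ => ?_
    rw [map_sub, PiLp.sub_apply, hrep]
    split_ifs <;> simp
  have hBrep : ∀ i, u.repr (g (g.adjoint w')) i = b i * u.repr w' i := fun i =>
    hpos.isSymmetric.eigenvectorBasis_apply_self_apply hfin w' i
  refine ⟨w', |u.repr w k|, ?_, ?_, ?_⟩
  · intro h
    rw [← hrepk, h] at hk0
    simp at hk0
  · rw [hdiff]; exact hk
  · have h1 : ‖g (g.adjoint w')‖ = √(∑ i, (b i * u.repr w' i) ^ 2) := by
      rw [← Real.sqrt_sq (norm_nonneg (g _)), hnorm]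
      simp only [hBrep]
    have h2 : ‖g.adjoint w'‖ ^ 2 = ∑ i, b i * u.repr w' i ^ 2 := by
      rw [← real_inner_self_eq_norm_sq, LinearMap.adjoint_inner_left, ← u.repr.inner_map_map,
        PiLp.inner_apply]
      refine Finset.sum_congr rfl fun i _ => ?_
      rw [hBrep]
      simp
      ring
    rw [h1, h2, ← hrepk]
    exact abs_mul_sqrt_le (hpos.nonneg_eigenvalues hfin) (hpos.isSymmetric.eigenvalues_antitone hfin)
      k fun i hi => by simp [hrep, hi]

lemma infDist_hyperplane_le {E : Type*} [NormedAddCommGroup E] [InnerProductSpace ℝ E]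
    {v y : E} {c : ℝ} (hv : v ≠ 0) (hc : ⟪y, v⟫ ≤ c) :
    infDist y {x | ⟪x, v⟫ = c} ≤ (c - ⟪y, v⟫) / ‖v‖ := by
  have hv' : 0 < ‖v‖ := norm_pos_iff.2 hv
  have hmem : y + ((c - ⟪y, v⟫) / ‖v‖ ^ 2) • v ∈ {x | ⟪x, v⟫ = c} := by
    simp only [mem_ofPred_eq, inner_add_left, real_inner_smul_left, real_inner_self_eq_norm_sq]
    field_simp
    ring
  refine (infDist_le_dist_of_mem hmem).trans (le_of_eq ?_)
  rw [dist_self_add_right, norm_smul, Real.norm_eq_abs,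
    abs_of_nonneg (div_nonneg (sub_nonneg.2 hc) (by positivity))]
  field_simp

/-- The line spanned by `v` meets the ellipsoid `f '' closedBall 0 1` in the segment between
`± v / ‖f⁻¹ v‖`. -/
lemma diam_line_ge {n : ℕ} {S : Set (EuclideanSpace ℝ (Fin n))} (hScomp : IsCompact S)
    (f : EuclideanSpace ℝ (Fin n) ≃ₗ[ℝ] EuclideanSpace ℝ (Fin n))
    (hES : f '' closedBall 0 1 ⊆ S) {v : EuclideanSpace ℝ (Fin n)} (hv : v ≠ 0) :
    2 * ‖v‖ / ‖f.symm v‖ ≤ diam ((Submodule.span ℝ {v} : Set (EuclideanSpace ℝ (Fin n))) ∩ S) := by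
  have hgv : 0 < ‖f.symm v‖ := norm_pos_iff.2 (by simpa using hv)
  have hmem : ∀ r : ℝ, |r| = 1 / ‖f.symm v‖ →
      r • v ∈ (Submodule.span ℝ {v} : Set (EuclideanSpace ℝ (Fin n))) ∩ S := by
    intro r hr
    refine ⟨Submodule.smul_mem _ _ (Submodule.mem_span_singleton_self v), hES ⟨r • f.symm v, ?_, ?_⟩⟩
    · rw [mem_closedBall_zero_iff, norm_smul, Real.norm_eq_abs, hr]
      field_simp
      exact le_refl _
    · simp
  have h := dist_le_diam_of_mem (hScomp.isBounded.subset inter_subset_right)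
    (hmem (1 / ‖f.symm v‖) (abs_of_pos (by positivity)))
    (hmem (-(1 / ‖f.symm v‖)) (by rw [abs_neg, abs_of_pos (by positivity)]))
  refine le_trans (le_of_eq ?_) h
  rw [dist_eq_norm, ← sub_smul, norm_smul, Real.norm_eq_abs, sub_neg_eq_add,
    abs_of_pos (by positivity)]
  ring

/-- The sharper form of the estimate, with `s = σ ^ n`, rate `σ`, and no dependence of the constant
on an upper bound for `s`. -/
lemma exists_good_support (n : ℕ) (hn : 1 ≤ n)
    (S : Set (EuclideanSpace ℝ (Fin n)))
    (hScomp : IsCompact S) (hSconv : Convex ℝ S) (hSint : (interior S).Nonempty)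
    (f : EuclideanSpace ℝ (Fin n) ≃ₗ[ℝ] EuclideanSpace ℝ (Fin n))
    (hES : f '' closedBall 0 1 ⊆ S)
    (hSE : S ⊆ (n : ℝ) • (f '' closedBall 0 1))
    (σ : ℝ) (hσ : 0 < σ) (hσ1 : σ < 1)
    (p : EuclideanSpace ℝ (Fin n)) (hp : p ∈ frontier S) :
    ∃ (v : EuclideanSpace ℝ (Fin n)) (c : ℝ), v ≠ 0 ∧
      ({x | ⟪x, v⟫ = c} ∩ S).Nonempty ∧
      (∀ x ∈ S, ⟪x, v⟫ ≤ c) ∧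
      infDist ((1 - σ ^ n) • p) {x | ⟪x, v⟫ = c} ≤
        ((n : ℝ) * √n * ((n : ℝ) - 1 / 2)) * σ *
          diam ((Submodule.span ℝ {v} : Set (EuclideanSpace ℝ (Fin n))) ∩ S) := by
  have hn1 : (1 : ℝ) ≤ n := by exact_mod_cast hn
  have hpS : p ∈ S := hScomp.isClosed.frontier_subset hp
  have hs1 : σ ^ n ≤ 1 := pow_le_one₀ hσ.le hσ1.le
  have hs0 : 0 < σ ^ n := by positivity
  set g : EuclideanSpace ℝ (Fin n) →ₗ[ℝ] EuclideanSpace ℝ (Fin n) := f.symm.toLinearMap with hg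
  have hgf : ∀ z, g (f z) = z := fun z => by simp [hg]
  have hfg : ∀ z, f (g z) = z := fun z => by simp [hg]
  have hgn : ∀ x ∈ S, ‖g x‖ ≤ n := by
    intro x hx
    obtain ⟨_, ⟨z, hz, rfl⟩, rfl⟩ := hSE hx
    simp only [map_smul, hgf, norm_smul, Real.norm_natCast]
    rw [mem_closedBall_zero_iff] at hz
    nlinarith
  have hadj : ∀ x z, ⟪x, g.adjoint z⟫ = ⟪g x, z⟫ := fun x z => g.adjoint_inner_right x z
  have h0S : (0 : EuclideanSpace ℝ (Fin n)) ∈ S := hES ⟨0, by simp, by simp⟩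
  -- a functional supporting `S` at `p`, normalized in the coordinates where the ellipsoid is a ball
  obtain ⟨w, hw, hwsup⟩ : ∃ w : EuclideanSpace ℝ (Fin n), ‖w‖ = 1 ∧
      ∀ x ∈ S, ⟪g x, w⟫ ≤ ⟪g p, w⟫ := by
    obtain ⟨v, hv, hvs⟩ := exists_support hSconv hSint hp
    set w₀ := (f.toLinearMap).adjoint v with hw₀
    have hin : ∀ x, ⟪g x, w₀⟫ = ⟪x, v⟫ := fun x => by
      rw [hw₀, LinearMap.adjoint_inner_right]
      change ⟪f (g x), v⟫ = _
      rw [hfg]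
    have hw0 : w₀ ≠ 0 := fun h => hv (by
      have := hin v
      rw [h, inner_zero_right] at this
      exact inner_self_eq_zero.1 this.symm)
    refine ⟨‖w₀‖⁻¹ • w₀, norm_smul_inv_norm hw0, fun x hx => ?_⟩
    rw [real_inner_smul_right, real_inner_smul_right, hin, hin]
    exact mul_le_mul_of_nonneg_left (hvs x hx) (by positivity)
  obtain ⟨w', m, hw'0, hbound, hm⟩ := exists_truncation g w hw hσ hσ1
  set v := g.adjoint w' with hvdef
  have hv : v ≠ 0 := fun h => hw'0 (by
    have := hadj (f w') w'
    rw [← hvdef, h, inner_zero_right, hgf] at this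
    exact inner_self_eq_zero.1 this.symm)
  obtain ⟨x₀, hx₀, hmax⟩ := hScomp.exists_isMaxOn ⟨p, hpS⟩
    (f := fun x => ⟪x, v⟫) (by fun_prop)
  have hmax : ∀ x ∈ S, ⟪x, v⟫ ≤ ⟪x₀, v⟫ := fun x hx => hmax hx
  refine ⟨v, ⟪x₀, v⟫, hv, ⟨x₀, rfl, hx₀⟩, hmax, ?_⟩
  set y := (1 - σ ^ n) • p with hy
  have hyS : y ∈ S :=
    hSconv.smul_mem_of_zero_mem h0S hpS ⟨by linarith, by linarith⟩
  refine (infDist_hyperplane_le hv (hmax y hyS)).trans ?_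
  have hdiam := diam_line_ge hScomp f hES hv
  change 2 * ‖v‖ / ‖g v‖ ≤ _ at hdiam
  have hvpos : 0 < ‖v‖ := norm_pos_iff.2 hv
  have hgv : 0 < ‖g v‖ := norm_pos_iff.2 fun h => hv (by rw [← hfg v, h, map_zero])
  -- `w` supports at `p`, so only the shrinking `p ↦ (1 - σ ^ n) p` and the truncation contribute
  have hgap : ⟪x₀, v⟫ - ⟪y, v⟫ ≤ σ ^ n * n + 2 * n * ‖w - w'‖ := by
    have e1 : ⟪x₀, v⟫ - ⟪y, v⟫ = (⟪g x₀, w⟫ - ⟪g p, w⟫) + σ ^ n * ⟪g p, w⟫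
        - ⟪g x₀ - g y, w - w'⟫ := by
      rw [hadj, hadj]
      have : g y = (1 - σ ^ n) • g p := by rw [hy, map_smul]
      rw [this]
      simp only [inner_sub_left, inner_sub_right, real_inner_smul_left]
      ring
    have e2 : ⟪g p, w⟫ ≤ n := by
      have := real_inner_le_norm (g p) w
      rw [hw, mul_one] at this
      exact this.trans (hgn p hpS)
    have e3 : -⟪g x₀ - g y, w - w'⟫ ≤ 2 * n * ‖w - w'‖ := by
      refine (neg_le_abs _).trans ((abs_real_inner_le_norm _ _).trans ?_)
      gcongr
      exact (norm_sub_le _ _).trans (by linarith [hgn x₀ hx₀, hgn y hyS])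
    have e4 := mul_le_mul_of_nonneg_left e2 hs0.le
    linarith [hwsup x₀ hx₀]
  have hC : 0 ≤ (n : ℝ) * √n * (n - 1 / 2) * σ :=
    mul_nonneg (mul_nonneg (by positivity) (by linarith)) hσ.le
  have hm' : m ≤ ‖v‖ ^ 2 / ‖g v‖ := (le_div_iff₀ hgv).2 hm
  rw [div_le_iff₀ hvpos]
  calc ⟪x₀, v⟫ - ⟪y, v⟫ ≤ n * √n * (2 * n - 1) * σ * m := hgap.trans hbound
    _ = (n * √n * (n - 1 / 2) * σ) * (2 * m) := by ring
    _ ≤ (n * √n * (n - 1 / 2) * σ) * (2 * (‖v‖ ^ 2 / ‖g v‖)) := by gcongr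
    _ = (n * √n * (n - 1 / 2) * σ) * (2 * ‖v‖ / ‖g v‖) * ‖v‖ := by ring
    _ ≤ _ := by gcongr

/-- Let `S ⊂ ℝⁿ` (`n ≥ 1`) be a well-centered convex body
(a compact convex set with nonempty interior such that `E ⊆ S ⊆ n • E` for some
ellipsoid `E` centered at the origin, i.e. the image of the unit ball under an
invertible linear map), and fix `0 ≤ s ≤ s₀ < 1`.  For each `y ∈ (1-s) ∂S`
there is a supporting hyperplane `P = {x | ⟪x, v⟫ = c}` of `S` with
`dist(y, P) ≤ c(n, s₀) · s^(1/2^(n-1)) · diam (P^⊥ ∩ S)`, where `P^⊥` is the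
line through the origin spanned by `v` and
`c(n, s₀) = n^(3/2) (n - 1/2) ((1 + s₀^(1/2^n)) / (1 - s₀^(1/2^n)))^(n-1)`. -/
theorem statement0 (n : ℕ) (hn : 1 ≤ n)
    (S : Set (EuclideanSpace ℝ (Fin n)))
    (hScomp : IsCompact S) (hSconv : Convex ℝ S) (hSint : (interior S).Nonempty)
    (f : EuclideanSpace ℝ (Fin n) ≃ₗ[ℝ] EuclideanSpace ℝ (Fin n))
    (hES : f '' closedBall 0 1 ⊆ S)
    (hSE : S ⊆ (n : ℝ) • (f '' closedBall 0 1))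
    (s s₀ : ℝ) (hs : 0 ≤ s) (hss₀ : s ≤ s₀) (hs₀ : s₀ < 1)
    (p : EuclideanSpace ℝ (Fin n)) (hp : p ∈ frontier S)
    (y : EuclideanSpace ℝ (Fin n)) (hy : y = (1 - s) • p) :
    ∃ (v : EuclideanSpace ℝ (Fin n)) (c : ℝ), v ≠ 0 ∧
      ({x | ⟪x, v⟫ = c} ∩ S).Nonempty ∧
      (∀ x ∈ S, ⟪x, v⟫ ≤ c) ∧
      infDist y {x | ⟪x, v⟫ = c} ≤
        ((n : ℝ) ^ ((3 : ℝ) / 2) * ((n : ℝ) - 1 / 2) *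
            ((1 + s₀ ^ ((1 : ℝ) / 2 ^ n)) / (1 - s₀ ^ ((1 : ℝ) / 2 ^ n))) ^ (n - 1)) *
          s ^ ((1 : ℝ) / 2 ^ (n - 1)) *
          diam ((Submodule.span ℝ {v} : Set (EuclideanSpace ℝ (Fin n))) ∩ S) := by
  have hn1 : (1 : ℝ) ≤ n := by exact_mod_cast hn
  have hfac : (1 : ℝ) ≤
      ((1 + s₀ ^ ((1 : ℝ) / 2 ^ n)) / (1 - s₀ ^ ((1 : ℝ) / 2 ^ n))) ^ (n - 1) := by
    have h0 : 0 ≤ s₀ := hs.trans hss₀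
    have h1 : 0 ≤ s₀ ^ ((1 : ℝ) / 2 ^ n) := Real.rpow_nonneg h0 _
    have h2 : s₀ ^ ((1 : ℝ) / 2 ^ n) < 1 := Real.rpow_lt_one h0 hs₀ (by positivity)
    refine one_le_pow₀ ?_
    rw [one_le_div (by linarith)]
    linarith
  have hhalf : (0 : ℝ) ≤ n - 1 / 2 := by linarith
  rcases hs.eq_or_lt with rfl | hspos
  · obtain ⟨v, hv, hvs⟩ := exists_support hSconv hSint hp
    refine ⟨v, ⟪p, v⟫, hv, ⟨p, rfl, hScomp.isClosed.frontier_subset hp⟩, hvs, ?_⟩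
    have hyp : y ∈ {x | ⟪x, v⟫ = ⟪p, v⟫} := by simp [hy]
    rw [infDist_zero_of_mem hyp]
    refine mul_nonneg (mul_nonneg (mul_nonneg (mul_nonneg (by positivity) hhalf) ?_) ?_) diam_nonneg
    · linarith
    · exact Real.rpow_nonneg le_rfl _
  · have hn0 : (n : ℝ) ≠ 0 := by positivity
    have hs1 : s < 1 := hss₀.trans_lt hs₀
    set σ := s ^ ((1 : ℝ) / n) with hσdef
    have hσ : 0 < σ := Real.rpow_pos_of_pos hspos _
    have hσ1 : σ < 1 := Real.rpow_lt_one hs hs1 (by positivity)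
    have hσn : σ ^ n = s := by
      rw [hσdef, ← Real.rpow_natCast, ← Real.rpow_mul hs, one_div, inv_mul_cancel₀ hn0,
        Real.rpow_one]
    have hσle : σ ≤ s ^ ((1 : ℝ) / 2 ^ (n - 1)) := by
      refine Real.rpow_le_rpow_of_exponent_ge hspos hs1.le ?_
      have : n ≤ 2 ^ (n - 1) := by
        have := Nat.lt_two_pow_self (n := n - 1)
        omega
      have : (n : ℝ) ≤ 2 ^ (n - 1) := by exact_mod_cast this
      gcongr
    have hpow : (n : ℝ) ^ ((3 : ℝ) / 2) = n * √n := by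
      rw [Real.sqrt_eq_rpow, show (3 : ℝ) / 2 = 1 + 1 / 2 by norm_num,
        Real.rpow_add (by positivity), Real.rpow_one]
    obtain ⟨v, c, hv, hne, hsup, hdist⟩ :=
      exists_good_support n hn S hScomp hSconv hSint f hES hSE σ hσ hσ1 p hp
    refine ⟨v, c, hv, hne, hsup, ?_⟩
    rw [hy, hpow]
    rw [hσn] at hdist
    refine hdist.trans ?_
    have hC : 0 ≤ (n : ℝ) * √n * (n - 1 / 2) := mul_nonneg (by positivity) hhalf
    exact mul_le_mul_of_nonneg_right (mul_le_mul (le_mul_of_one_le_right hC hfac) hσle hσ.le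
      (mul_nonneg hC (by linarith))) diam_nonneg
end

section
/- Let S ⊂ ℝⁿ be a well-centered convex body with inner John ellipsoid E, coordinates along the principal axes of E with semi-axis lengths a¹,…,aⁿ > 0, and R_n = {x ∈ ℝⁿ : |xⁱ| ≤ n aⁱ for i = 1,…,n}. Then for every line ℓ through the origin, diam(ℓ ∩ R_n) ≤ n^(3/2) · diam(ℓ ∩ S). -/
/-!
Since each coordinate of a point of `R` satisfies `(xⁱ/aⁱ)² ≤ n²`, summing gives
`∑ (xⁱ/aⁱ)² ≤ n³`, that is `R ⊆ n^(3/2) • E ⊆ n^(3/2) • S`. Lines through the origin are invariant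
under scaling, so `ℓ ∩ R ⊆ n^(3/2) • (ℓ ∩ S)`, and diameters scale accordingly.
-/

open Metric Set
open scoped RealInnerProductSpace Pointwise

/-- Let `S ⊂ ℝⁿ` be a well-centered convex body with inner John
ellipsoid `E = {x | ∑ i, (xⁱ/aⁱ)² ≤ 1}` (`aⁱ > 0`, `E ⊆ S ⊆ n • E`), and
`R_n = {x | ∀ i, |xⁱ| ≤ n aⁱ}`.  Then for every line `ℓ` through the origin
(the span of some `v ≠ 0`), `diam (ℓ ∩ R_n) ≤ n^(3/2) · diam (ℓ ∩ S)`. -/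
theorem statement2 (n : ℕ) (hn : 1 ≤ n)
    (S : Set (EuclideanSpace ℝ (Fin n)))
    (hScomp : IsCompact S) (hSconv : Convex ℝ S) (hSint : (interior S).Nonempty)
    (a : Fin n → ℝ) (ha : ∀ i, 0 < a i)
    (E : Set (EuclideanSpace ℝ (Fin n)))
    (hE : E = {x | ∑ i, (x i / a i) ^ 2 ≤ 1})
    (hES : E ⊆ S) (hSE : S ⊆ (n : ℝ) • E)
    (R : Set (EuclideanSpace ℝ (Fin n)))
    (hR : R = {x | ∀ i, |x i| ≤ n * a i})
    (v : EuclideanSpace ℝ (Fin n)) (hv : v ≠ 0) :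
    diam ((Submodule.span ℝ {v} : Set (EuclideanSpace ℝ (Fin n))) ∩ R) ≤
      (n : ℝ) ^ ((3 : ℝ) / 2) *
        diam ((Submodule.span ℝ {v} : Set (EuclideanSpace ℝ (Fin n))) ∩ S) := by
  subst hE hR
  have hn0 : (0 : ℝ) < n := by exact_mod_cast hn
  set c : ℝ := (n : ℝ) ^ ((3 : ℝ) / 2) with hc
  have hc0 : 0 < c := Real.rpow_pos_of_pos hn0 _
  have hc2 : c ^ 2 = (n : ℝ) ^ 3 := by
    rw [hc, ← Real.rpow_natCast, ← Real.rpow_mul hn0.le, ← Real.rpow_natCast]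
    norm_num
  have key : ∀ x ∈ (Submodule.span ℝ {v} : Set (EuclideanSpace ℝ (Fin n))) ∩
      {x | ∀ i, |x i| ≤ n * a i},
      c⁻¹ • x ∈ (Submodule.span ℝ {v} : Set (EuclideanSpace ℝ (Fin n))) ∩ S := by
    rintro x ⟨hxv, hxR⟩
    refine ⟨Submodule.smul_mem _ _ hxv, hES ?_⟩
    have hcoord : ∀ i, ((c⁻¹ • x) i / a i) ^ 2 ≤ (c ^ 2)⁻¹ * (n : ℝ) ^ 2 := by
      intro i
      have h1 : |x i / a i| ≤ n := by
        rw [abs_div, abs_of_pos (ha i), div_le_iff₀ (ha i)]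
        exact hxR i
      have h2 : (x i / a i) ^ 2 ≤ (n : ℝ) ^ 2 := sq_le_sq' (abs_le.mp h1).1 (abs_le.mp h1).2
      have h3 : ((c⁻¹ • x) i / a i) ^ 2 = (c ^ 2)⁻¹ * (x i / a i) ^ 2 := by
        simp only [PiLp.smul_apply, smul_eq_mul]
        ring
      rw [h3]
      gcongr
    calc ∑ i, ((c⁻¹ • x) i / a i) ^ 2
        ≤ ∑ _i : Fin n, (c ^ 2)⁻¹ * (n : ℝ) ^ 2 := Finset.sum_le_sum fun i _ => hcoord i
      _ = 1 := by
        rw [Finset.sum_const, Finset.card_univ, Fintype.card_fin, nsmul_eq_mul, hc2]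
        field_simp
      _ ≤ 1 := le_rfl
  -- Boundedness is what makes `diam` an upper bound for distances rather than a junk value.
  have hbdd : Bornology.IsBounded
      ((Submodule.span ℝ {v} : Set (EuclideanSpace ℝ (Fin n))) ∩ S) :=
    hScomp.isBounded.subset inter_subset_right
  refine diam_le_of_forall_dist_le (mul_nonneg hc0.le diam_nonneg) fun x hx y hy => ?_
  have h := dist_le_diam_of_mem hbdd (key x hx) (key y hy)
  rwa [dist_smul₀, norm_inv, Real.norm_of_nonneg hc0.le, inv_mul_le_iff₀ hc0] at h
end

section
/- Let S ⊂ ℝⁿ be a well-centered convex body with inner John ellipsoid E, coordinates along the principal axes of E with semi-axis lengths a¹,…,aⁿ > 0, and R_n = {x ∈ ℝⁿ : |xⁱ| ≤ n aⁱ}. Let 0 ≤ s ≤ 1, let p ∈ ∂S, y = (1−s)p, and let P be a hyperplane supporting S at p. If diam(P^⊥ ∩ R_n) ≥ 2 s^(1/2) dist(0, P), then dist(y, P) ≤ (n^(3/2)/2) · s^(1/2) · diam(P^⊥ ∩ S). -/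
open Metric Set
open scoped RealInnerProductSpace Pointwise

/-!
Write `d` for the distance from `0` to `P`. Contracting `P` by the factor `s` towards `p ∈ P`
gives points `(1 - s) • p + s • q` of `P` at distance `s * ‖q‖` from `y = (1 - s) • p`, so
`dist(y, P) ≤ s * d` (`infDist_smul_hyperplane_le`). The hypothesis bounds this by
`s ^ (1/2) * diam (P^⊥ ∩ R_n) / 2`. Finally the box `R_n` is contained in `n ^ (3/2) • E`
(`inv_smul_mem_ellipsoid`), hence in `n ^ (3/2) • S`, so passing from `P^⊥ ∩ R_n` to `P^⊥ ∩ S`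
costs at most a factor `n ^ (3/2)` in the diameter.
-/

/-- The homothety `q ↦ (1 - s) • p + s • q` preserves the hyperplane and maps `0` to `(1 - s) • p`. -/
lemma infDist_smul_hyperplane_le {F : Type*} [NormedAddCommGroup F] [InnerProductSpace ℝ F]
    {p v : F} {c s : ℝ} (hs0 : 0 ≤ s) (hp : ⟪p, v⟫ = c) :
    infDist ((1 - s) • p) {x : F | ⟪x, v⟫ = c} ≤ s * infDist 0 {x : F | ⟪x, v⟫ = c} := by
  have key : ∀ q ∈ {x : F | ⟪x, v⟫ = c},
      infDist ((1 - s) • p) {x : F | ⟪x, v⟫ = c} ≤ s * dist 0 q := by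
    intro q hq
    have hq' : ⟪q, v⟫ = c := hq
    have hmem : (1 - s) • p + s • q ∈ {x : F | ⟪x, v⟫ = c} := by
      simp only [mem_ofPred_eq, inner_add_left, real_inner_smul_left, hp, hq']
      ring
    refine (infDist_le_dist_of_mem hmem).trans_eq ?_
    rw [dist_self_add_right, norm_smul, Real.norm_of_nonneg hs0, dist_zero_left]
  rcases hs0.eq_or_lt with rfl | hs
  · simpa using key p hp
  · rw [← div_le_iff₀' hs, le_infDist ⟨p, hp⟩]
    intro q hq
    rw [div_le_iff₀' hs]
    exact key q hq

lemma diam_le_mul_diam_of_inv_smul_mem {F : Type*} [NormedAddCommGroup F] [NormedSpace ℝ F]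
    {A B : Set F} {k : ℝ} (hk : 0 < k) (hB : Bornology.IsBounded B)
    (h : ∀ x ∈ A, k⁻¹ • x ∈ B) : diam A ≤ k * diam B := by
  refine diam_le_of_forall_dist_le (by positivity) fun x hx z hz => ?_
  have hd := dist_le_diam_of_mem hB (h x hx) (h z hz)
  rwa [dist_smul₀, Real.norm_of_nonneg (by positivity), inv_mul_le_iff₀ hk] at hd

/-- The box `R_n` lies in `n ^ (3/2) • E`: each of the `n` summands is at most `n² / n³`. -/
lemma inv_smul_mem_ellipsoid {n : ℕ} (hn : 1 ≤ n) {a : Fin n → ℝ} (ha : ∀ i, 0 < a i)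
    {x : EuclideanSpace ℝ (Fin n)} (hx : ∀ i, |x i| ≤ n * a i) :
    ∑ i, ((((n : ℝ) ^ ((3 : ℝ) / 2))⁻¹ • x) i / a i) ^ 2 ≤ 1 := by
  have hn0 : (0 : ℝ) < n := by exact_mod_cast hn
  have hk : ((n : ℝ) ^ ((3 : ℝ) / 2)) ^ 2 = (n : ℝ) ^ 3 := by
    rw [← Real.rpow_natCast, ← Real.rpow_mul hn0.le, ← Real.rpow_natCast]
    norm_num
  have hterm : ∀ i, ((((n : ℝ) ^ ((3 : ℝ) / 2))⁻¹ • x) i / a i) ^ 2 ≤ (n : ℝ)⁻¹ := by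
    intro i
    have hxi : (x i / a i) ^ 2 ≤ (n : ℝ) ^ 2 := by
      rw [sq_le_sq, abs_div, abs_of_pos (ha i), abs_of_pos hn0, div_le_iff₀ (ha i)]
      exact hx i
    calc ((((n : ℝ) ^ ((3 : ℝ) / 2))⁻¹ • x) i / a i) ^ 2
        = ((n : ℝ) ^ 3)⁻¹ * (x i / a i) ^ 2 := by
          rw [PiLp.smul_apply, smul_eq_mul, mul_div_assoc, mul_pow, inv_pow, hk]
      _ ≤ ((n : ℝ) ^ 3)⁻¹ * (n : ℝ) ^ 2 := by gcongr
      _ = (n : ℝ)⁻¹ := by field_simp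
  calc _ ≤ ∑ _i : Fin n, (n : ℝ)⁻¹ := Finset.sum_le_sum fun i _ => hterm i
    _ = 1 := by simp [hn0.ne']

/-- Let `S ⊂ ℝⁿ` be a well-centered convex body with inner John
ellipsoid `E = {x | ∑ i, (xⁱ/aⁱ)² ≤ 1}` (`aⁱ > 0`, `E ⊆ S ⊆ n • E`), and
`R_n = {x | ∀ i, |xⁱ| ≤ n aⁱ}`.  Let `0 ≤ s ≤ 1`, `p ∈ ∂S`, `y = (1-s) • p`,
and let `P = {x | ⟪x, v⟫ = c}` be a hyperplane supporting `S` at `p`.  If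
`diam (P^⊥ ∩ R_n) ≥ 2 s^(1/2) dist(0, P)`, then
`dist(y, P) ≤ (n^(3/2)/2) · s^(1/2) · diam (P^⊥ ∩ S)`, where `P^⊥` is the span
of `v`. -/
theorem statement4 (n : ℕ) (hn : 1 ≤ n)
    (S : Set (EuclideanSpace ℝ (Fin n)))
    (hScomp : IsCompact S) (hSconv : Convex ℝ S) (hSint : (interior S).Nonempty)
    (a : Fin n → ℝ) (ha : ∀ i, 0 < a i)
    (E : Set (EuclideanSpace ℝ (Fin n)))
    (hE : E = {x | ∑ i, (x i / a i) ^ 2 ≤ 1})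
    (hES : E ⊆ S) (hSE : S ⊆ (n : ℝ) • E)
    (R : Set (EuclideanSpace ℝ (Fin n)))
    (hR : R = {x | ∀ i, |x i| ≤ n * a i})
    (s : ℝ) (hs0 : 0 ≤ s) (hs1 : s ≤ 1)
    (p : EuclideanSpace ℝ (Fin n)) (hp : p ∈ frontier S)
    (y : EuclideanSpace ℝ (Fin n)) (hy : y = (1 - s) • p)
    (v : EuclideanSpace ℝ (Fin n)) (hv : v ≠ 0) (c : ℝ)
    (hpP : ⟪p, v⟫ = c) (hpS : p ∈ S)
    (hsupp : ∀ x ∈ S, ⟪x, v⟫ ≤ c)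
    (hbig : 2 * s ^ ((1 : ℝ) / 2) * infDist 0 {x : EuclideanSpace ℝ (Fin n) | ⟪x, v⟫ = c} ≤
      diam ((Submodule.span ℝ {v} : Set (EuclideanSpace ℝ (Fin n))) ∩ R)) :
    infDist y {x : EuclideanSpace ℝ (Fin n) | ⟪x, v⟫ = c} ≤
      ((n : ℝ) ^ ((3 : ℝ) / 2) / 2) * s ^ ((1 : ℝ) / 2) *
        diam ((Submodule.span ℝ {v} : Set (EuclideanSpace ℝ (Fin n))) ∩ S) := by
  set P : Set (EuclideanSpace ℝ (Fin n)) := {x | ⟪x, v⟫ = c} with hP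
  set L : Set (EuclideanSpace ℝ (Fin n)) :=
    (Submodule.span ℝ {v} : Set (EuclideanSpace ℝ (Fin n))) with hL
  have h1 : infDist y P ≤ s * infDist 0 P := by
    rw [hy]
    exact infDist_smul_hyperplane_le hs0 hpP
  have h2 : diam (L ∩ R) ≤ (n : ℝ) ^ ((3 : ℝ) / 2) * diam (L ∩ S) := by
    have hn0 : (0 : ℝ) < n := by exact_mod_cast hn
    have hk0 : 0 < (n : ℝ) ^ ((3 : ℝ) / 2) := Real.rpow_pos_of_pos hn0 _
    refine diam_le_mul_diam_of_inv_smul_mem hk0 (hScomp.isBounded.subset inter_subset_right) ?_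
    rintro x ⟨hxL, hxR⟩
    refine ⟨Submodule.smul_mem _ _ hxL, hES ?_⟩
    subst hE hR
    exact inv_smul_mem_ellipsoid hn ha hxR
  have hsq : s = s ^ ((1 : ℝ) / 2) * s ^ ((1 : ℝ) / 2) := by
    rw [← Real.sqrt_eq_rpow, Real.mul_self_sqrt hs0]
  have hr0 : 0 ≤ s ^ ((1 : ℝ) / 2) := Real.rpow_nonneg hs0 _
  generalize s ^ ((1 : ℝ) / 2) = r at *
  calc infDist y P ≤ r * (r * infDist 0 P) := by rw [← mul_assoc, ← hsq]; exact h1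
    _ ≤ r * (((n : ℝ) ^ ((3 : ℝ) / 2) * diam (L ∩ S)) / 2) := by
        gcongr
        linarith
    _ = _ := by ring
end

section
/- Let S ⊂ ℝⁿ be a well-centered convex body with inner John ellipsoid E, coordinates along the principal axes of E with semi-axis lengths a¹,…,aⁿ > 0. Fix 0 ≤ s ≤ s₀ < 1, set c₀ = (1 + s₀^(1/2^n))/(1 − s₀^(1/2^n)), and for 2 ≤ k ≤ n let π_k : ℝⁿ → ℝᵏ be the projection onto the first k coordinates and R_k = {x ∈ ℝᵏ : |xⁱ| ≤ c₀^(n−k) n aⁱ for i = 1,…,k}. Suppose y ∈ S, P_k ⊂ ℝᵏ is a hyperplane with 0 ∉ P_k such that: (i) the cylinder π_k⁻¹(P_k) does not meet the interior of S; (ii) dist(π_k(y), P_k) ≤ (2(n−k)+1) s^(1/2^(n−k)) dist(0, P_k); and (iii) diam(P_k^⊥ ∩ R_k) ≥ 2 s^(1/2^(n−k+1)) dist(0, P_k), where P_k^⊥ is the line through the origin of ℝᵏ orthogonal to P_k. Then there exists a hyperplane P ⊂ ℝⁿ supporting S such that dist(y, P) ≤ n^(3/2) c₀^(n−k) (n −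 k + 1/2) s^(1/2^(n−k+1)) diam(P^⊥ ∩ S). -/
/-!
The supporting hyperplane is the one parallel to the cylinder `π⁻¹(P_k)`: its normal `w` is the
normal `v` of `P_k` padded with zeros, oriented so that `P_k = {⟪x, v⟫ = c}` with `c > 0`. The
interior of `S` is connected, contains `0` and misses the cylinder, so `S` lies in `⟪x, w⟫ ≤ c`
(`inner_le_of_forall_interior_ne`). Moving the cylinder towards `S` until it touches only brings it
closer to `y`, so `dist(y, P) ≤ dist(π y, P_k)`. Since `s^(1/2^(n-k))` is the square of
`s^(1/2^(n-k+1))`, hypotheses (ii) and (iii) bound `dist(π y, P_k)` by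
`(n - k + 1/2) s^(1/2^(n-k+1)) diam (P_k^⊥ ∩ R_k)`. Finally a box with half-sides `r aⁱ` lies in
`r √k` times the ellipsoid with semi-axes `aⁱ`, so that `P_k^⊥ ∩ R_k`, padded with zeros, lies in
`n^(3/2) c₀^(n-k) (P^⊥ ∩ S)` (`diam_span_inter_box_le`).
-/

open Metric Set
open scoped RealInnerProductSpace Pointwise

/-- The distance to a hyperplane given by a normal vector. -/
lemma infDist_hyperplane {F : Type*} [NormedAddCommGroup F] [InnerProductSpace ℝ F]
    (p v : F) (hv : v ≠ 0) (c : ℝ) :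
    infDist p {x : F | ⟪x, v⟫ = c} = |⟪p, v⟫ - c| / ‖v‖ := by
  have hvn : 0 < ‖v‖ := norm_pos_iff.mpr hv
  set q : F := p - ((⟪p, v⟫ - c) / ‖v‖ ^ 2) • v with hq
  have hqm : q ∈ {x : F | ⟪x, v⟫ = c} := by
    simp only [mem_ofPred_eq, hq, inner_sub_left, real_inner_smul_left, real_inner_self_eq_norm_sq]
    field_simp
    ring
  apply le_antisymm
  · refine (infDist_le_dist_of_mem hqm).trans (le_of_eq ?_)
    rw [dist_eq_norm, hq, sub_sub_cancel, norm_smul, Real.norm_eq_abs, abs_div,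
      abs_of_pos (by positivity : (0 : ℝ) < ‖v‖ ^ 2)]
    field_simp
  · rw [le_infDist ⟨q, hqm⟩]
    intro x hx
    rw [div_le_iff₀ hvn, dist_eq_norm, ← (show ⟪x, v⟫ = c from hx), ← inner_sub_left]
    exact abs_real_inner_le_norm _ _

/-- A hyperplane which misses the interior of a convex body, the interior containing `0`, has the
body on the side of `0`. -/
lemma inner_le_of_forall_interior_ne {F : Type*} [NormedAddCommGroup F] [InnerProductSpace ℝ F]
    {S : Set F} (hS : Convex ℝ S) (h0 : (0 : F) ∈ interior S) (w : F) {c : ℝ} (hc : 0 < c)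
    (h : ∀ x ∈ interior S, ⟪x, w⟫ ≠ c) : ∀ x ∈ S, ⟪x, w⟫ ≤ c := by
  have hint : ∀ x ∈ interior S, ⟪x, w⟫ ≤ c := by
    intro x hx
    by_contra! hlt
    have hcont : Continuous fun z : F => ⟪z, w⟫ := by fun_prop
    obtain ⟨z, hz, hzc⟩ := hS.interior.isPreconnected.intermediate_value h0 hx hcont.continuousOn
      (show c ∈ Icc ⟪(0 : F), w⟫ ⟪x, w⟫ from ⟨by simpa using hc.le, hlt.le⟩)
    exact h z hz hzc
  intro x hx
  have hcl : IsClosed {z : F | ⟪z, w⟫ ≤ c} := isClosed_le (by fun_prop) continuous_const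
  have hxc : x ∈ closure (interior S) := by
    rw [hS.closure_interior_eq_closure_of_nonempty_interior ⟨0, h0⟩]
    exact subset_closure hx
  exact closure_minimal hint hcl hxc

/-- The inclusion `ℝᵏ → ℝⁿ` that appends `n - k` zero coordinates. -/
noncomputable def zeroPad (n k : ℕ) (x : EuclideanSpace ℝ (Fin k)) : EuclideanSpace ℝ (Fin n) :=
  WithLp.toLp 2 fun j => if h : (j : ℕ) < k then x ⟨j, h⟩ else 0

lemma zeroPad_castLE {n k : ℕ} (hkn : k ≤ n) (x : EuclideanSpace ℝ (Fin k)) (i : Fin k) :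
    zeroPad n k x (Fin.castLE hkn i) = x i := by
  simp [zeroPad]

lemma zeroPad_of_le {n k : ℕ} (x : EuclideanSpace ℝ (Fin k)) (j : Fin n) (hj : k ≤ j) :
    zeroPad n k x j = 0 := by
  simp [zeroPad, not_lt.mpr hj]

lemma zeroPad_smul {n k : ℕ} (r : ℝ) (x : EuclideanSpace ℝ (Fin k)) :
    zeroPad n k (r • x) = r • zeroPad n k x := by
  ext j
  by_cases h : (j : ℕ) < k <;> simp [zeroPad, h]

lemma zeroPad_sub {n k : ℕ} (x x' : EuclideanSpace ℝ (Fin k)) :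
    zeroPad n k (x - x') = zeroPad n k x - zeroPad n k x' := by
  ext j
  by_cases h : (j : ℕ) < k <;> simp [zeroPad, h]

lemma sum_castLE {n k : ℕ} (hkn : k ≤ n) (f : Fin n → ℝ) (hf : ∀ j : Fin n, k ≤ j → f j = 0) :
    ∑ j, f j = ∑ i : Fin k, f (Fin.castLE hkn i) := by
  symm
  refine Fintype.sum_of_injective (Fin.castLE hkn) (Fin.castLE_injective hkn) _ _ ?_
    (fun _ => rfl)
  intro j hj
  refine hf j (not_lt.mp fun hlt => hj ⟨⟨j, hlt⟩, ?_⟩)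
  ext
  rfl

lemma inner_zeroPad {n k : ℕ} (hkn : k ≤ n) (x : EuclideanSpace ℝ (Fin n))
    (x' v : EuclideanSpace ℝ (Fin k)) (hx : ∀ i, x' i = x (Fin.castLE hkn i)) :
    ⟪x, zeroPad n k v⟫ = ⟪x', v⟫ := by
  simp only [PiLp.inner_apply]
  rw [sum_castLE hkn _ (fun j hj => by simp [zeroPad_of_le v j hj])]
  exact Finset.sum_congr rfl fun i _ => by rw [zeroPad_castLE, hx]

lemma norm_zeroPad {n k : ℕ} (hkn : k ≤ n) (x : EuclideanSpace ℝ (Fin k)) :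
    ‖zeroPad n k x‖ = ‖x‖ := by
  rw [← sq_eq_sq₀ (norm_nonneg _) (norm_nonneg _), ← real_inner_self_eq_norm_sq,
    ← real_inner_self_eq_norm_sq]
  exact inner_zeroPad hkn _ _ _ fun i => (zeroPad_castLE hkn x i).symm

/-- If `S` contains the ellipsoid with semi-axes `aⁱ`, a line through `0` in the first `k`
coordinates meets the box with half-sides `r aⁱ` in a set at most `r √k` times as long as its
intersection with `S`. -/
lemma diam_span_inter_box_le {n k : ℕ} (hk : 0 < k) (hkn : k ≤ n)
    {S : Set (EuclideanSpace ℝ (Fin n))} (hS : IsCompact S) (a : Fin n → ℝ) (ha : ∀ i, 0 < a i)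
    (hES : {x : EuclideanSpace ℝ (Fin n) | ∑ i, (x i / a i) ^ 2 ≤ 1} ⊆ S) {r : ℝ} (hr : 0 < r)
    (v : EuclideanSpace ℝ (Fin k)) :
    diam ((Submodule.span ℝ {v} : Set (EuclideanSpace ℝ (Fin k))) ∩
        {x | ∀ i : Fin k, |x i| ≤ r * a (Fin.castLE hkn i)}) ≤
      r * √k * diam ((Submodule.span ℝ {zeroPad n k v} : Set (EuclideanSpace ℝ (Fin n))) ∩ S) := by
  have hk' : (0 : ℝ) < k := by exact_mod_cast hk
  set C : ℝ := r * √k with hC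
  have hCpos : 0 < C := by positivity
  have hmem : ∀ x ∈ (Submodule.span ℝ {v} : Set (EuclideanSpace ℝ (Fin k))) ∩
      {x | ∀ i : Fin k, |x i| ≤ r * a (Fin.castLE hkn i)},
      C⁻¹ • zeroPad n k x ∈
        (Submodule.span ℝ {zeroPad n k v} : Set (EuclideanSpace ℝ (Fin n))) ∩ S := by
    rintro x ⟨hxv, hxR⟩
    constructor
    · obtain ⟨t, rfl⟩ := Submodule.mem_span_singleton.mp hxv
      rw [zeroPad_smul]
      exact Submodule.smul_mem _ _ (Submodule.smul_mem _ _ (Submodule.mem_span_singleton_self _))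
    · apply hES
      rw [mem_ofPred_eq, sum_castLE hkn _ (fun j hj => by simp [zeroPad_of_le x j hj])]
      have hterm : ∀ i : Fin k, ((C⁻¹ • zeroPad n k x) (Fin.castLE hkn i) /
          a (Fin.castLE hkn i)) ^ 2 ≤ 1 / k := by
        intro i
        have hai := ha (Fin.castLE hkn i)
        rw [PiLp.smul_apply, zeroPad_castLE, smul_eq_mul]
        have h1 : (x i) ^ 2 ≤ (r * a (Fin.castLE hkn i)) ^ 2 := sq_le_sq' (by
          have := neg_abs_le (x i); linarith [hxR i]) ((le_abs_self _).trans (hxR i))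
        have h2 : (C⁻¹ * x i / a (Fin.castLE hkn i)) ^ 2 =
            x i ^ 2 / ((r * a (Fin.castLE hkn i)) ^ 2 * k) := by
          have h3 : C ^ 2 = r ^ 2 * k := by rw [hC, mul_pow, Real.sq_sqrt hk'.le]
          rw [div_pow, mul_pow, inv_pow, h3]
          field_simp
        rw [h2, div_le_div_iff₀ (by positivity) hk']
        nlinarith
      refine (Finset.sum_le_sum fun i _ => hterm i).trans (le_of_eq ?_)
      simp [hk'.ne']
  refine diam_le_of_forall_dist_le (by positivity) fun x hx x' hx' => ?_
  have hle := dist_le_diam_of_mem (hS.isBounded.subset inter_subset_right) (hmem x hx) (hmem x' hx')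
  rw [dist_eq_norm, ← smul_sub, ← zeroPad_sub, norm_smul, norm_zeroPad hkn, norm_inv,
    Real.norm_of_nonneg hCpos.le, ← dist_eq_norm, inv_mul_le_iff₀ hCpos] at hle
  exact hle

lemma zero_mem_interior_of_ellipsoid_subset {n : ℕ} {S : Set (EuclideanSpace ℝ (Fin n))}
    (a : Fin n → ℝ)
    (hES : {x : EuclideanSpace ℝ (Fin n) | ∑ i, (x i / a i) ^ 2 ≤ 1} ⊆ S) :
    (0 : EuclideanSpace ℝ (Fin n)) ∈ interior S := by
  rw [mem_interior]
  refine ⟨{x | ∑ i, (x i / a i) ^ 2 < 1}, fun x hx => hES ?_, ?_, by simp⟩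
  · rw [mem_ofPred_eq] at hx ⊢
    exact hx.le
  refine isOpen_lt ?_ continuous_const
  simp only [div_eq_mul_inv]
  fun_prop

/-- Let `S ⊂ ℝⁿ` be a well-centered convex body with inner John
ellipsoid `E = {x | ∑ i, (xⁱ/aⁱ)² ≤ 1}` (`aⁱ > 0`, `E ⊆ S ⊆ n • E`).  Fix
`0 ≤ s ≤ s₀ < 1`, set `c₀ = (1 + s₀^(1/2^n))/(1 - s₀^(1/2^n))`, and for
`2 ≤ k ≤ n` let `π_k : ℝⁿ → ℝᵏ` be the projection onto the first `k`
coordinates and `R_k = {x ∈ ℝᵏ | ∀ i ≤ k, |xⁱ| ≤ c₀^(n-k) n aⁱ}`.  Suppose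
`y ∈ S` and `P_k = {x' ∈ ℝᵏ | ⟪x', v⟫ = c}` (`v ≠ 0`) is a hyperplane with
`0 ∉ P_k` such that (i) `π_k⁻¹(P_k)` does not meet the interior of `S`,
(ii) `dist(π_k y, P_k) ≤ (2(n-k)+1) s^(1/2^(n-k)) dist(0, P_k)`, and
(iii) `diam (P_k^⊥ ∩ R_k) ≥ 2 s^(1/2^(n-k+1)) dist(0, P_k)`.  Then some
hyperplane `P` supporting `S` satisfies
`dist(y, P) ≤ n^(3/2) c₀^(n-k) (n-k+1/2) s^(1/2^(n-k+1)) diam (P^⊥ ∩ S)`. -/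
theorem statement5 (n k : ℕ) (hk2 : 2 ≤ k) (hkn : k ≤ n)
    (S : Set (EuclideanSpace ℝ (Fin n)))
    (hScomp : IsCompact S) (hSconv : Convex ℝ S) (hSint : (interior S).Nonempty)
    (a : Fin n → ℝ) (ha : ∀ i, 0 < a i)
    (E : Set (EuclideanSpace ℝ (Fin n)))
    (hE : E = {x | ∑ i, (x i / a i) ^ 2 ≤ 1})
    (hES : E ⊆ S) (hSE : S ⊆ (n : ℝ) • E)
    (s s₀ : ℝ) (hs : 0 ≤ s) (hss₀ : s ≤ s₀) (hs₀ : s₀ < 1)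
    (c₀ : ℝ) (hc₀ : c₀ = (1 + s₀ ^ ((1 : ℝ) / 2 ^ n)) / (1 - s₀ ^ ((1 : ℝ) / 2 ^ n)))
    (π : EuclideanSpace ℝ (Fin n) → EuclideanSpace ℝ (Fin k))
    (hπ : ∀ x (i : Fin k), π x i = x (Fin.castLE hkn i))
    (Rk : Set (EuclideanSpace ℝ (Fin k)))
    (hRk : Rk = {x | ∀ i : Fin k, |x i| ≤ c₀ ^ (n - k) * n * a (Fin.castLE hkn i)})
    (y : EuclideanSpace ℝ (Fin n)) (hy : y ∈ S)
    (v : EuclideanSpace ℝ (Fin k)) (hv : v ≠ 0) (c : ℝ)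
    (h0P : (0 : EuclideanSpace ℝ (Fin k)) ∉ {x' : EuclideanSpace ℝ (Fin k) | ⟪x', v⟫ = c})
    (hcyl : ∀ x ∈ interior S, π x ∉ {x' : EuclideanSpace ℝ (Fin k) | ⟪x', v⟫ = c})
    (hii : infDist (π y) {x' : EuclideanSpace ℝ (Fin k) | ⟪x', v⟫ = c} ≤
      (2 * ((n : ℝ) - k) + 1) * s ^ ((1 : ℝ) / 2 ^ (n - k)) *
        infDist 0 {x' : EuclideanSpace ℝ (Fin k) | ⟪x', v⟫ = c})
    (hiii : 2 * s ^ ((1 : ℝ) / 2 ^ (n - k + 1)) *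
        infDist 0 {x' : EuclideanSpace ℝ (Fin k) | ⟪x', v⟫ = c} ≤
      diam ((Submodule.span ℝ {v} : Set (EuclideanSpace ℝ (Fin k))) ∩ Rk)) :
    ∃ (w : EuclideanSpace ℝ (Fin n)) (d : ℝ), w ≠ 0 ∧
      ({x | ⟪x, w⟫ = d} ∩ S).Nonempty ∧
      (∀ x ∈ S, ⟪x, w⟫ ≤ d) ∧
      infDist y {x | ⟪x, w⟫ = d} ≤
        (n : ℝ) ^ ((3 : ℝ) / 2) * c₀ ^ (n - k) * ((n : ℝ) - k + 1 / 2) *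
          s ^ ((1 : ℝ) / 2 ^ (n - k + 1)) *
          diam ((Submodule.span ℝ {w} : Set (EuclideanSpace ℝ (Fin n))) ∩ S) := by
  -- Orient the normal of `P_k` so that the offset `c` is positive.
  wlog hc : 0 < c generalizing v c with H
  · have hc0 : c ≠ 0 := fun h => h0P (by simp [h])
    have hset : {x' : EuclideanSpace ℝ (Fin k) | ⟪x', -v⟫ = -c} = {x' | ⟪x', v⟫ = c} := by
      ext x'
      simp
    have hspan : Submodule.span ℝ {-v} = Submodule.span ℝ {v} := by
      rw [← Set.neg_singleton, Submodule.span_neg]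
    refine H (-v) (neg_ne_zero.mpr hv) (-c) ?_ ?_ ?_ ?_ ?_
    · rwa [hset]
    · rwa [hset]
    · rwa [hset]
    · rwa [hset, hspan]
    · exact neg_pos.mpr (lt_of_le_of_ne (not_lt.mp hc) hc0)
  subst hE hRk
  have hn : (0 : ℝ) < n := by exact_mod_cast (by omega : 0 < n)
  have hvn : 0 < ‖v‖ := norm_pos_iff.mpr hv
  have hin : ∀ x, ⟪x, zeroPad n k v⟫ = ⟪π x, v⟫ := fun x => inner_zeroPad hkn x (π x) v (hπ x)
  have hnorm : ‖zeroPad n k v‖ = ‖v‖ := norm_zeroPad hkn v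
  have hw : zeroPad n k v ≠ 0 := by rw [← norm_pos_iff, hnorm]; exact hvn
  have hside := inner_le_of_forall_interior_ne hSconv
    (zero_mem_interior_of_ellipsoid_subset a hES) (zeroPad n k v) hc
    (fun x hx => by rw [hin]; exact hcyl x hx)
  obtain ⟨z, hz, hmax⟩ := hScomp.exists_isMaxOn ⟨y, hy⟩
    (show ContinuousOn (fun x => ⟪x, zeroPad n k v⟫) S by fun_prop)
  refine ⟨zeroPad n k v, ⟪z, zeroPad n k v⟫, hw, ⟨z, rfl, hz⟩, fun x hx => hmax hx, ?_⟩
  have hc₀pos : 0 < c₀ := by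
    have h1 : 0 ≤ s₀ ^ ((1 : ℝ) / 2 ^ n) := Real.rpow_nonneg (hs.trans hss₀) _
    have h2 : s₀ ^ ((1 : ℝ) / 2 ^ n) < 1 :=
      Real.rpow_lt_one (hs.trans hss₀) hs₀ (by positivity)
    rw [hc₀]
    exact div_pos (by linarith) (by linarith)
  have hsq : s ^ ((1 : ℝ) / 2 ^ (n - k)) =
      s ^ ((1 : ℝ) / 2 ^ (n - k + 1)) * s ^ ((1 : ℝ) / 2 ^ (n - k + 1)) := by
    rw [← Real.rpow_add_of_nonneg hs (by positivity) (by positivity)]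
    congr 1
    rw [pow_succ]
    field_simp
    norm_num
  have hdist : infDist y {x | ⟪x, zeroPad n k v⟫ = ⟪z, zeroPad n k v⟫} ≤
      infDist (π y) {x' : EuclideanSpace ℝ (Fin k) | ⟪x', v⟫ = c} := by
    rw [infDist_hyperplane _ _ hw, infDist_hyperplane _ _ hv, hnorm, ← hin y]
    have h1 : ⟪y, zeroPad n k v⟫ ≤ ⟪z, zeroPad n k v⟫ := hmax hy
    have h2 := hside z hz
    rw [abs_of_nonpos (by linarith), abs_of_nonpos (by linarith)]
    gcongr
  have hdiam := diam_span_inter_box_le (by omega) hkn hScomp a ha hES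
    (by positivity : 0 < c₀ ^ (n - k) * n) v
  have hpow : (n : ℝ) ^ ((3 : ℝ) / 2) = n * √n := by
    rw [Real.sqrt_eq_rpow, ← Real.rpow_one_add' hn.le (by norm_num)]
    norm_num
  have hkn' : (k : ℝ) ≤ n := by exact_mod_cast hkn
  have hsn : 0 ≤ s ^ ((1 : ℝ) / 2 ^ (n - k + 1)) := Real.rpow_nonneg hs _
  rw [hsq] at hii
  set t := s ^ ((1 : ℝ) / 2 ^ (n - k + 1))
  set D := diam ((Submodule.span ℝ {zeroPad n k v} : Set (EuclideanSpace ℝ (Fin n))) ∩ S)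
  have hD : 0 ≤ D := diam_nonneg
  have hfac : 0 ≤ ((n : ℝ) - k + 1 / 2) * t := mul_nonneg (by linarith) hsn
  calc _ ≤ _ := hdist
    _ ≤ _ := hii
    _ = ((n : ℝ) - k + 1 / 2) * t *
        (2 * t * infDist 0 {x' : EuclideanSpace ℝ (Fin k) | ⟪x', v⟫ = c}) := by ring
    _ ≤ ((n : ℝ) - k + 1 / 2) * t * (c₀ ^ (n - k) * n * √k * D) :=
        mul_le_mul_of_nonneg_left (hiii.trans hdiam) hfac
    _ ≤ ((n : ℝ) - k + 1 / 2) * t * (c₀ ^ (n - k) * n * √n * D) := by gcongr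
    _ = _ := by rw [hpow]; ring
end

section
/- Let k ≥ 2, let π : ℝᵏ → ℝ^(k−1) be the projection onto the first k−1 coordinates, let r ∈ ℝᵏ with rᵏ > 0 and π(r) ≠ 0, let 0 < a ≤ c, and set r' = λ π(r) with λ = (|r|² + c rᵏ)/|π(r)|². If x ∈ ℝᵏ satisfies x·r < |r|² and xᵏ > −a, then π(x)·r' < |r'|². (Consequently, if a convex body S lies in the half-space {x·r ≤ |r|²} and its interior lies in {xᵏ > −a}, then the projected hyperplane {x' : x'·r' = |r'|²} does not meet the projection of the interior of S.) -/
/-!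
Splitting off the last coordinate gives `⟪π x, π r⟫ = ⟪x, r⟫ - xᵏ rᵏ`. Since `rᵏ > 0` and
`xᵏ > -a ≥ -c`, this is less than `‖r‖² + c rᵏ`, which equals `λ ‖π r‖²` by the choice of `λ`.
Multiplying by `λ > 0` gives the claim.
-/

open Metric Set
open scoped RealInnerProductSpace Pointwise

/-- Let `k ≥ 2`, let `π : ℝᵏ → ℝ^(k-1)` be the projection onto
the first `k-1` coordinates, let `r ∈ ℝᵏ` with last coordinate `rᵏ > 0` and
`π r ≠ 0`, let `0 < a ≤ c`, and set `r' = λ • π r` with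
`λ = (‖r‖² + c rᵏ)/‖π r‖²`.  If `x ∈ ℝᵏ` satisfies `⟪x, r⟫ < ‖r‖²` and
`xᵏ > -a`, then `⟪π x, r'⟫ < ‖r'‖²`. -/
theorem statement9 (k : ℕ) (hk : 2 ≤ k)
    (π : EuclideanSpace ℝ (Fin k) → EuclideanSpace ℝ (Fin (k - 1)))
    (hπ : ∀ x (i : Fin (k - 1)), π x i = x (Fin.castLE (Nat.sub_le k 1) i))
    (r : EuclideanSpace ℝ (Fin k))
    (hrk : 0 < r ⟨k - 1, by omega⟩) (hπr : π r ≠ 0)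
    (a c : ℝ) (ha : 0 < a) (hac : a ≤ c)
    (lam : ℝ) (hlam : lam = (‖r‖ ^ 2 + c * r ⟨k - 1, by omega⟩) / ‖π r‖ ^ 2)
    (r' : EuclideanSpace ℝ (Fin (k - 1))) (hr' : r' = lam • π r)
    (x : EuclideanSpace ℝ (Fin k))
    (hx1 : ⟪x, r⟫ < ‖r‖ ^ 2) (hx2 : -a < x ⟨k - 1, by omega⟩) :
    ⟪π x, r'⟫ < ‖r'‖ ^ 2 := by
  obtain ⟨n, rfl⟩ : ∃ n, k = n + 1 := ⟨k - 1, by omega⟩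
  -- Splitting off the last coordinate: `⟪x, r⟫ = ⟪π x, π r⟫ + xᵏ rᵏ`.
  have hsplit : ⟪x, r⟫ = ⟪π x, π r⟫ + x (Fin.last n) * r (Fin.last n) := by
    simp only [PiLp.inner_apply, hπ, Fin.sum_univ_castSucc (n := n)]
    simp [mul_comm]
    rfl
  change 0 < r (Fin.last n) at hrk
  change -a < x (Fin.last n) at hx2
  change lam = (‖r‖ ^ 2 + c * r (Fin.last n)) / ‖π r‖ ^ 2 at hlam
  have hpos : 0 < ‖π r‖ ^ 2 := by positivity
  have hc : 0 < c := ha.trans_le hac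
  have hlam_pos : 0 < lam := by rw [hlam]; positivity
  have hlam_mul : lam * ‖π r‖ ^ 2 = ‖r‖ ^ 2 + c * r (Fin.last n) := by
    rw [hlam]; field_simp
  have key : ⟪π x, π r⟫ < lam * ‖π r‖ ^ 2 := by
    rw [hlam_mul]
    nlinarith [mul_pos hrk (show 0 < x (Fin.last n) + c by linarith)]
  rw [hr', inner_smul_right, norm_smul, mul_pow, Real.norm_eq_abs, sq_abs, sq lam, mul_assoc]
  exact mul_lt_mul_of_pos_left key hlam_pos
end

section
/- Let k ≥ 2, b¹,…,bᵏ > 0, R = {x ∈ ℝᵏ : |xⁱ| ≤ bⁱ for all i}, and let π : ℝᵏ → ℝ^(k−1) be the projection onto the first k−1 coordinates. Let P ⊂ ℝᵏ be a hyperplane not through the origin with foot of perpendicular r, and suppose rᵏ > 0 and the point r⁺ = (bᵏ/rᵏ) r lies in R (i.e. the segment [0, r] exits R through the face {xᵏ = bᵏ}). Let γ ∈ (0,1) and assume |r⁺| ≤ γ |r|. Let p ∈ P ∩ R with π(p) ≠ 0, let y ∈ [0, p], let T be the 2-dimensional subspace spanned by the k-th coordinate vector e_k and p, let ℓ = T ∩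 P (assumed to be a line meeting Q⁻ = {x : xᵏ = −bᵏ} in a single point q⁻), and set p' = π(q⁻). Then π(p) lies on the segment [0, p'], and p' ∈ (1 + 2γ/(1−γ)) · π(R), i.e. |(p')ⁱ| ≤ (1 + 2γ/(1−γ)) bⁱ for i = 1,…,k−1. In particular π(y) ∈ [0, p']. -/
open Metric Set
open scoped RealInnerProductSpace Pointwise

/-!
Every point of `T` has the form `a • e_k + c • p`, and `π` sends it to `c • π p`; so `p' = c • π p`
for the coefficient `c` of `p` in `q⁻`, and everything reduces to `1 ≤ c ≤ (1 + γ) / (1 - γ)`.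
Eliminating `a` from `⟪q⁻, r⟫ = ‖r‖²` and `(q⁻)ᵏ = -bᵏ` gives
`c * (‖r‖² - pᵏ rᵏ) = ‖r‖² + bᵏ rᵏ`.  The hypothesis `‖r⁺‖ ≤ γ ‖r‖` says `bᵏ ≤ γ rᵏ`, hence
`bᵏ rᵏ ≤ γ ‖r‖²`; together with `|pᵏ| ≤ bᵏ` this yields both bounds on `c`
(`coefficient_bounds`).
-/

/-- Bounds on the coefficient `c` of `p` in `q⁻`, where `N = ‖r‖²`, `B = bᵏ`, `ρ = rᵏ`,
`s = pᵏ`. -/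
lemma coefficient_bounds {N B ρ s γ c : ℝ} (hN : 0 < N) (hρ : 0 < ρ) (hγ1 : γ < 1)
    (hB : B * ρ ≤ γ * N) (hs : |s| ≤ B) (hc : c * (N - s * ρ) = N + B * ρ) :
    1 ≤ c ∧ c ≤ 1 + 2 * γ / (1 - γ) := by
  obtain ⟨hs1, hs2⟩ := abs_le.mp hs
  have h1γ : 0 < 1 - γ := by linarith
  have hsρ : s * ρ ≤ B * ρ := mul_le_mul_of_nonneg_right hs2 hρ.le
  have hsρ' : -B * ρ ≤ s * ρ := mul_le_mul_of_nonneg_right hs1 hρ.le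
  have hD : (1 - γ) * N ≤ N - s * ρ := by linarith
  have hD0 : 0 < N - s * ρ := lt_of_lt_of_le (mul_pos h1γ hN) hD
  have hc1 : 1 ≤ c := by
    by_contra! h
    have := mul_lt_mul_of_pos_right h hD0
    linarith
  refine ⟨hc1, ?_⟩
  have hmul : c * ((1 - γ) * N) ≤ (1 + γ) * N :=
    (mul_le_mul_of_nonneg_left hD (by linarith)).trans (by linarith)
  have hdiv : c * (1 - γ) ≤ 1 + γ := le_of_mul_le_mul_right (by linarith) hN
  have heq : 1 + 2 * γ / (1 - γ) = (1 + γ) / (1 - γ) := by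
    field_simp
    ring
  rw [heq, le_div_iff₀ h1γ]
  exact hdiv

/-- Let `k ≥ 2`, `b¹, …, bᵏ > 0`,
`R = {x ∈ ℝᵏ | ∀ i, |xⁱ| ≤ bⁱ}`, and let `π : ℝᵏ → ℝ^(k-1)` be the projection
onto the first `k-1` coordinates.  Let `P = {x | ⟪x, r⟫ = ‖r‖²}` be a
hyperplane not through the origin with foot of perpendicular `r ≠ 0`, with
`rᵏ > 0` and `r⁺ = (bᵏ/rᵏ) • r ∈ R`.  Let `γ ∈ (0,1)` with `‖r⁺‖ ≤ γ ‖r‖`.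
Let `p ∈ P ∩ R` with `π p ≠ 0`, `y ∈ [0, p]`, let `T` be the span of the
`k`-th coordinate vector `e_k` and `p`, and suppose `ℓ = T ∩ P` meets
`Q⁻ = {x | xᵏ = -bᵏ}` in the single point `q⁻`; set `p' = π q⁻`.  Then
`π p ∈ [0, p']`, `|p'ⁱ| ≤ (1 + 2γ/(1-γ)) bⁱ` for all `i`, and `π y ∈ [0, p']`. -/
theorem statement10 (k : ℕ) (hk : 2 ≤ k)
    (b : Fin k → ℝ) (hb : ∀ i, 0 < b i)
    (R : Set (EuclideanSpace ℝ (Fin k)))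
    (hR : R = {x | ∀ i, |x i| ≤ b i})
    (π : EuclideanSpace ℝ (Fin k) → EuclideanSpace ℝ (Fin (k - 1)))
    (hπ : ∀ x (i : Fin (k - 1)), π x i = x (Fin.castLE (Nat.sub_le k 1) i))
    (r : EuclideanSpace ℝ (Fin k)) (hr : r ≠ 0)
    (hrk : 0 < r ⟨k - 1, by omega⟩)
    (rp : EuclideanSpace ℝ (Fin k))
    (hrpdef : rp = (b ⟨k - 1, by omega⟩ / r ⟨k - 1, by omega⟩) • r)
    (hrpR : rp ∈ R)
    (γ : ℝ) (hγ0 : 0 < γ) (hγ1 : γ < 1) (hrpγ : ‖rp‖ ≤ γ * ‖r‖)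
    (p : EuclideanSpace ℝ (Fin k)) (hpP : ⟪p, r⟫ = ‖r‖ ^ 2) (hpR : p ∈ R)
    (hπp : π p ≠ 0)
    (y : EuclideanSpace ℝ (Fin k)) (hy : y ∈ segment ℝ 0 p)
    (T : Submodule ℝ (EuclideanSpace ℝ (Fin k)))
    (hT : T = Submodule.span ℝ {EuclideanSpace.single ⟨k - 1, by omega⟩ (1 : ℝ), p})
    (qm : EuclideanSpace ℝ (Fin k))
    (hqm : (T : Set (EuclideanSpace ℝ (Fin k))) ∩
        {x : EuclideanSpace ℝ (Fin k) | ⟪x, r⟫ = ‖r‖ ^ 2} ∩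
        {x : EuclideanSpace ℝ (Fin k) | x ⟨k - 1, by omega⟩ = -(b ⟨k - 1, by omega⟩)} =
      {qm})
    (p' : EuclideanSpace ℝ (Fin (k - 1))) (hp' : p' = π qm) :
    π p ∈ segment ℝ 0 p' ∧
    (∀ i : Fin (k - 1), |p' i| ≤ (1 + 2 * γ / (1 - γ)) * b (Fin.castLE (Nat.sub_le k 1) i)) ∧
    π y ∈ segment ℝ 0 p' := by
  subst hR hT
  have hkk : k - 1 < k := by omega
  set l : Fin k := ⟨k - 1, hkk⟩ with hl
  have hq : qm ∈ ({qm} : Set (EuclideanSpace ℝ (Fin k))) := rfl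
  rw [← hqm] at hq
  obtain ⟨⟨hqT, hqP⟩, hqQ⟩ := hq
  obtain ⟨a, c, hac⟩ := Submodule.mem_span_pair.mp hqT
  simp only [mem_setOf_eq] at hqP hqQ hpR
  have hnr : 0 < ‖r‖ := norm_pos_iff.mpr hr
  have hqk : a + c * p l = -(b l) := by
    rw [← hqQ, ← hac]
    simp
  have hqi : a * r l + c * ‖r‖ ^ 2 = ‖r‖ ^ 2 := by
    rw [← hac, inner_add_left, real_inner_smul_left, real_inner_smul_left, hpP,
      EuclideanSpace.inner_single_left] at hqP
    simpa using hqP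
  have hbγ : b l ≤ γ * r l := by
    rw [hrpdef, norm_smul, Real.norm_eq_abs, abs_of_pos (div_pos (hb l) hrk)] at hrpγ
    exact (div_le_iff₀ hrk).mp (le_of_mul_le_mul_right hrpγ hnr)
  have hrl : r l * r l ≤ ‖r‖ ^ 2 := by
    have h := PiLp.norm_apply_le r l
    rw [Real.norm_eq_abs, abs_of_pos hrk] at h
    nlinarith
  have hB : b l * r l ≤ γ * ‖r‖ ^ 2 := by nlinarith
  obtain ⟨hc1, hc2⟩ := coefficient_bounds (c := c) (pow_pos hnr 2) hrk hγ1 hB (hpR l)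
    (by linear_combination hqi - r l * hqk)
  have hc0 : 0 < c := by linarith
  have hp'i : ∀ i, p' i = c * p (Fin.castLE (Nat.sub_le k 1) i) := by
    intro i
    have hne : Fin.castLE (Nat.sub_le k 1) i ≠ l := by
      intro h
      have := congrArg Fin.val h
      simp only [Fin.val_castLE, hl] at this
      omega
    rw [hp', hπ, ← hac]
    simp [hne]
  -- `π (t • p) = (t / c) • p'`, and `t / c ∈ [0, 1]` because `c ≥ 1`.
  have hseg : ∀ t : ℝ, 0 ≤ t → t ≤ 1 → π (t • p) ∈ segment ℝ 0 p' := by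
    intro t ht0 ht1
    refine ⟨1 - t / c, t / c, ?_, by positivity, by ring, ?_⟩
    · rw [sub_nonneg, div_le_one hc0]
      linarith
    · ext i
      simp only [smul_zero, zero_add, PiLp.smul_apply, smul_eq_mul, hp'i, hπ]
      field_simp
  refine ⟨by simpa using hseg 1 zero_le_one le_rfl, ?_, ?_⟩
  · intro i
    rw [hp'i, abs_mul, abs_of_pos hc0]
    exact mul_le_mul hc2 (hpR _) (abs_nonneg _) (by linarith)
  · obtain ⟨u, t, hu, ht, hut, rfl⟩ := hy
    simpa using hseg t ht (by linarith)
end
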